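/- For every α > 0 there is a unique s ≥ 0 such that limsup_{n→∞} (1/n) log Σ_{ȷ ∈ {1,…,N}^n} λ_ȷ^s (1 − (1 − p_ȷ)^{e^{αn}}) = 0, where (1 − p_ȷ)^{e^{αn}} = exp(e^{αn} log(1 − p_ȷ)); and this unique s equals inf_{q∈[0,1]} P_α(q). -/

import Mathlib

/-!
Write `Z(s, q) = Σ_i λ_i^s (p_i e^α)^q` and `S_n(s)` for the sum over words of length `n`. The
main point is that `(1/n) log S_n(s)` converges to `log min_{q ∈ [0,1]} Z(s, q)`
(`tendsto_pressure`).

Up to a factor `2`, the quantity `1 - (1 - p_ȷ)^(e^(αn))` is `min(1, b_ȷ)` with `b_ȷ = p_ȷ e^(αn)`.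
Since `min(1, b) ≤ b^q` for `q ∈ [0,1]`, multiplicativity gives `S_n(s) ≤ Z(s, q)^n`
(`wordSum_le`). For the lower bound (`le_wordSum`), let `q` minimise `Z(s, ·)` on `[0,1]` and weight
words by the product of `g_i = λ_i^s (p_i e^α)^q`. Under the normalised weights, `log b_ȷ` is a sum
of `n` i.i.d. steps whose mean `m` is `∂_q log Z(s, q)`, and the first-order condition at the
minimum says `q m ≤ 0 ≤ (1 - q) m`. Hence `b_ȷ^(-q) min(1, b_ȷ) ≥ exp(-|log b_ȷ - n m|)`, and as
the variance of `log b_ȷ` is `O(n)`, the loss is only a factor `exp(-O(√n))`.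

So `s` is a root of the pressure iff `min_{q ∈ [0,1]} Z(s, q) = 1`. Because `Z` is strictly
decreasing in `s` and `Z(P_α(q), q) = 1`, this says exactly that `s` is the least value of `P_α` on
`[0,1]`. The least value exists because `P_α` is lower semicontinuous (`{P_α > c} = {Z(c, ·) > 1}`
is open), and it is nonnegative because `Z(0, q) ≥ 1`.
-/


open MeasureTheory Filter Topology Set ENNReal

noncomputable section

/-- The cylinder set in `{1,…,N}^ℕ` determined by a finite word `w` of length `m`. -/
def cylinder {N m : ℕ} (w : Fin m → Fin N) : Set (ℕ → Fin N) :=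
  {x | ∀ j : Fin m, x (j : ℕ) = w j}

/-- The product `r_{w 0} ⋯ r_{w (m-1)}` of weights along a finite word `w`. -/
def wordProd {N : ℕ} (r : Fin N → ℝ) {m : ℕ} (w : Fin m → Fin N) : ℝ :=
  ∏ j, r (w j)

/-- The composition `f_{x 0} ∘ f_{x 1} ∘ ⋯ ∘ f_{x (n-1)}` of the maps along
the first `n` symbols of `x`; the coding map is `π x = lim_n prefixMap f x n 0`. -/
def prefixMap {N : ℕ} {E : Type*} (f : Fin N → E → E) (x : ℕ → Fin N) : ℕ → E → E
  | 0 => id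
  | n + 1 => fun y => f (x 0) (prefixMap f (fun k => x (k + 1)) n y)

/-- The symbolic limsup set `⋂ₖ ⋃_{n ≥ k} [(σⁿ ō)|_{ℓ(n)}]`; its image under the
coding map `π` is the dynamical covering set `R(ō, ℓ)`. -/
def limsupCylinders {N : ℕ} (ℓ : ℕ → ℕ) (o : ℕ → Fin N) : Set (ℕ → Fin N) :=
  ⋂ k, ⋃ n, ⋃ _ : k ≤ n, cylinder (fun j : Fin (ℓ n) => o (n + (j : ℕ)))

/-- `m(n) = ⌊#{k ∈ ℕ : ℓ(k) = n}/n⌋`. -/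
def countM (ℓ : ℕ → ℕ) (n : ℕ) : ℕ := Nat.card {k : ℕ | ℓ k = n} / n

/-- The probabilistic pressure
`L(s) = limsup_n (1/n) log Σ_{|ȷ|=n} λ_ȷ^s (1 − (1 − p_ȷ)^{m(n)})`. -/
def pressL {N : ℕ} (lam p : Fin N → ℝ) (m : ℕ → ℕ) (s : ℝ) : ℝ :=
  Filter.limsup (fun n : ℕ => Real.log (∑ w : Fin n → Fin N,
    wordProd lam w ^ s * (1 - (1 - wordProd p w) ^ m n)) / (n : ℝ)) atTop

/-- The one-letter partition function `Z(s, q) = Σ_i λ_i^s (p_i e^α)^q`, so that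
`Z(P_α(q), q) = 1`. -/
def partZ {N : ℕ} (lam p : Fin N → ℝ) (α s q : ℝ) : ℝ :=
  ∑ i, lam i ^ s * (p i * Real.exp α) ^ q

/-- The sum over words of length `n` whose exponential growth rate is the pressure. -/
def wordSum {N : ℕ} (lam p : Fin N → ℝ) (α s : ℝ) (n : ℕ) : ℝ :=
  ∑ w : Fin n → Fin N,
    wordProd lam w ^ s * (1 - (1 - wordProd p w) ^ Real.exp (α * (n : ℝ)))

/-! ### Elementary bounds for `1 - (1 - p)^M` -/

lemma hit_le_rpow {p M q : ℝ} (hp : 0 < p) (hp1 : p ≤ 1) (hM : 1 ≤ M)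
    (hq : q ∈ Icc (0 : ℝ) 1) : 1 - (1 - p) ^ M ≤ (p * M) ^ q := by
  have hb : 0 < p * M := by positivity
  rcases le_total 1 (p * M) with h | h
  · have h1 : 1 ≤ (p * M) ^ q := Real.one_le_rpow h hq.1
    have h2 : 0 ≤ (1 - p) ^ M := Real.rpow_nonneg (by linarith) _
    linarith
  · have h1 : (p * M) ^ (1 : ℝ) ≤ (p * M) ^ q :=
      Real.rpow_le_rpow_of_exponent_ge hb h hq.2
    have h2 := one_add_mul_self_le_rpow_one_add (s := -p) (by linarith) hM
    rw [Real.rpow_one] at h1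
    have h3 : (1 + -p) = 1 - p := by ring
    rw [h3] at h2
    nlinarith

lemma exp_min_le_hit {p M : ℝ} (hp : 0 < p) (hp1 : p ≤ 1) (hM : 0 < M) :
    Real.exp (min 0 (Real.log (p * M))) / 2 ≤ 1 - (1 - p) ^ M := by
  have hb : 0 < p * M := by positivity
  have h1 : (1 - p) ^ M ≤ Real.exp (-(p * M)) := by
    have : (1 - p) ^ M ≤ (Real.exp (-p)) ^ M :=
      Real.rpow_le_rpow (by linarith) (by linarith [Real.add_one_le_exp (-p)]) hM.le
    rwa [← Real.exp_mul, neg_mul] at this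
  have h2 : Real.exp (-(p * M)) ≤ 1 / (1 + p * M) := by
    rw [Real.exp_neg, ← one_div]
    exact one_div_le_one_div_of_le (by linarith) (by linarith [Real.add_one_le_exp (p * M)])
  have h3 : Real.exp (min 0 (Real.log (p * M))) / 2 ≤ 1 - 1 / (1 + p * M) := by
    have e : 1 - 1 / (1 + p * M) = p * M / (1 + p * M) := by
      field_simp
      ring
    rw [e, div_le_div_iff₀ (by norm_num) (by linarith)]
    have i1 : Real.exp (min 0 (Real.log (p * M))) ≤ 1 :=
      Real.exp_le_one_iff.2 (min_le_left _ _)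
    have i2 : Real.exp (min 0 (Real.log (p * M))) ≤ p * M :=
      (Real.exp_le_exp.2 (min_le_right _ _)).trans_eq (Real.exp_log hb)
    nlinarith [mul_le_mul_of_nonneg_right i1 hb.le]
  linarith

/-! ### Products and moments over words -/

lemma wordProd_pos {N : ℕ} {r : Fin N → ℝ} (hr : ∀ i, 0 < r i) {n : ℕ}
    (w : Fin n → Fin N) : 0 < wordProd r w :=
  Finset.prod_pos fun _ _ => hr _

lemma wordProd_cons {N : ℕ} (r : Fin N → ℝ) {n : ℕ} (i : Fin N) (w : Fin n → Fin N) :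
    wordProd r (Fin.cons i w : Fin (n + 1) → Fin N) = r i * wordProd r w := by
  simp [wordProd, Fin.prod_univ_succ]

lemma sum_words_succ {N n : ℕ} (F : (Fin (n + 1) → Fin N) → ℝ) :
    ∑ w, F w = ∑ i, ∑ w : Fin n → Fin N, F (Fin.cons i w) := by
  rw [← (Fin.consEquiv fun _ : Fin (n + 1) => Fin N).sum_comp, Fintype.sum_prod_type]
  rfl

lemma sum_wordProd {N : ℕ} (g : Fin N → ℝ) (n : ℕ) :
    ∑ w : Fin n → Fin N, wordProd g w = (∑ i, g i) ^ n := by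
  induction n with
  | zero => simp [wordProd]
  | succ n ih =>
    simp_rw [sum_words_succ, wordProd_cons, ← Finset.mul_sum, ih, ← Finset.sum_mul]
    ring

/-- First and second moments of the random walk with steps `c`, where a word `w` has
(unnormalised) weight `wordProd g w` and `c` is centred with variance `V`. -/
lemma moments {N : ℕ} (g c : Fin N → ℝ) (V : ℝ) (h1 : ∑ i, g i * c i = 0)
    (h2 : ∑ i, g i * c i ^ 2 = V * ∑ i, g i) (n : ℕ) :
    ∑ w : Fin n → Fin N, wordProd g w * ∑ j, c (w j) = 0 ∧
    ∑ w : Fin n → Fin N, wordProd g w * (∑ j, c (w j)) ^ 2 = n * V * (∑ i, g i) ^ n := by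
  induction n with
  | zero => simp
  | succ n ih =>
    obtain ⟨ih1, ih2⟩ := ih
    have h0 := sum_wordProd g n
    refine ⟨?_, ?_⟩
    · rw [sum_words_succ]
      have : ∀ i, ∑ w : Fin n → Fin N, wordProd g (Fin.cons i w : Fin (n + 1) → Fin N) *
          ∑ j, c ((Fin.cons i w : Fin (n + 1) → Fin N) j) =
          g i * c i * (∑ i, g i) ^ n := by
        intro i
        have e : ∀ w : Fin n → Fin N, wordProd g (Fin.cons i w : Fin (n + 1) → Fin N) *
          ∑ j, c ((Fin.cons i w : Fin (n + 1) → Fin N) j) =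
          g i * c i * wordProd g w + g i * (wordProd g w * ∑ j, c (w j)) := by
          intro w
          rw [wordProd_cons, Fin.sum_univ_succ]
          simp only [Fin.cons_zero, Fin.cons_succ]
          ring
        simp_rw [e, Finset.sum_add_distrib, ← Finset.mul_sum, ih1, h0]
        ring
      simp_rw [this, ← Finset.sum_mul, h1, zero_mul]
    · rw [sum_words_succ]
      have : ∀ i, ∑ w : Fin n → Fin N, wordProd g (Fin.cons i w : Fin (n + 1) → Fin N) *
          (∑ j, c ((Fin.cons i w : Fin (n + 1) → Fin N) j)) ^ 2 =
          (g i * c i ^ 2) * (∑ i, g i) ^ n + g i * (n * V * (∑ i, g i) ^ n) := by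
        intro i
        have e : ∀ w : Fin n → Fin N, wordProd g (Fin.cons i w : Fin (n + 1) → Fin N) *
          (∑ j, c ((Fin.cons i w : Fin (n + 1) → Fin N) j)) ^ 2 =
          (g i * c i ^ 2) * wordProd g w + (2 * g i * c i) * (wordProd g w * ∑ j, c (w j))
            + g i * (wordProd g w * (∑ j, c (w j)) ^ 2) := by
          intro w
          rw [wordProd_cons, Fin.sum_univ_succ]
          simp only [Fin.cons_zero, Fin.cons_succ]
          ring
        simp_rw [e, Finset.sum_add_distrib, ← Finset.mul_sum, ih1, ih2, h0]
        ring
      simp_rw [this, Finset.sum_add_distrib, ← Finset.sum_mul, h2]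
      push_cast
      ring

/-- The typical displacement of the centred walk is `O(√n)`, so the exponential moment of
`-|displacement|` decays only subexponentially relative to the total mass. -/
lemma exp_neg_abs_moment {N : ℕ} (g c : Fin N → ℝ) (hg : ∀ i, 0 < g i) (V : ℝ)
    (h1 : ∑ i, g i * c i = 0) (h2 : ∑ i, g i * c i ^ 2 = V * ∑ i, g i) (n : ℕ)
    {t : ℝ} (ht : 0 < t) (htV : n * V ≤ t ^ 2) :
    Real.exp (-t) * (∑ i, g i) ^ n ≤
      ∑ w : Fin n → Fin N, wordProd g w * Real.exp (-|∑ j, c (w j)|) := by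
  have hZ : 0 ≤ ∑ i, g i := Finset.sum_nonneg fun i _ => (hg i).le
  -- Tangent line of `exp` at `-t`, then `2 |y| ≤ y ^ 2 / t + t`.
  have key : ∀ y : ℝ, Real.exp (-t) * (1 + t / 2 - y ^ 2 / (2 * t)) ≤ Real.exp (-|y|) := by
    intro y
    have a1 : Real.exp (-|y|) = Real.exp (-t) * Real.exp (t - |y|) := by
      rw [← Real.exp_add]
      ring_nf
    have a2 : |y| ≤ y ^ 2 / (2 * t) + t / 2 := by
      have : y ^ 2 / (2 * t) + t / 2 - |y| = (|y| - t) ^ 2 / (2 * t) := by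
        rw [← sq_abs y]
        field_simp
        ring
      have : 0 ≤ (|y| - t) ^ 2 / (2 * t) := by positivity
      linarith
    rw [a1]
    refine mul_le_mul_of_nonneg_left ?_ (Real.exp_pos _).le
    linarith [Real.add_one_le_exp (t - |y|)]
  have step : ∑ w : Fin n → Fin N, wordProd g w *
      (Real.exp (-t) * (1 + t / 2 - (∑ j, c (w j)) ^ 2 / (2 * t))) ≤
      ∑ w : Fin n → Fin N, wordProd g w * Real.exp (-|∑ j, c (w j)|) :=
    Finset.sum_le_sum fun w _ =>
      mul_le_mul_of_nonneg_left (key _) (wordProd_pos hg w).le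
  refine le_trans ?_ step
  have e : ∀ w : Fin n → Fin N, wordProd g w *
      (Real.exp (-t) * (1 + t / 2 - (∑ j, c (w j)) ^ 2 / (2 * t))) =
      Real.exp (-t) * (1 + t / 2) * wordProd g w -
      Real.exp (-t) / (2 * t) * (wordProd g w * (∑ j, c (w j)) ^ 2) := by
    intro w
    ring
  simp_rw [e, Finset.sum_sub_distrib, ← Finset.mul_sum, (moments g c V h1 h2 n).2,
    sum_wordProd]
  have f : Real.exp (-t) * (1 + t / 2) * (∑ i, g i) ^ n -
      Real.exp (-t) / (2 * t) * (n * V * (∑ i, g i) ^ n) =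
      Real.exp (-t) * (∑ i, g i) ^ n +
      Real.exp (-t) * (∑ i, g i) ^ n * ((t ^ 2 - n * V) / (2 * t)) := by
    field_simp
    ring
  rw [f]
  have : 0 ≤ (t ^ 2 - n * V) / (2 * t) := div_nonneg (by linarith) (by positivity)
  have : 0 ≤ Real.exp (-t) * (∑ i, g i) ^ n * ((t ^ 2 - n * V) / (2 * t)) := by positivity
  linarith

lemma wordProd_rpow_mul {N : ℕ} {lam p : Fin N → ℝ} (hl : ∀ i, 0 < lam i)
    (hp : ∀ i, 0 < p i) (α s q : ℝ) {n : ℕ} (w : Fin n → Fin N) :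
    wordProd lam w ^ s * (wordProd p w * Real.exp (α * n)) ^ q =
      wordProd (fun i => lam i ^ s * (p i * Real.exp α) ^ q) w := by
  have h : wordProd p w * Real.exp (α * n) = ∏ j, p (w j) * Real.exp α := by
    rw [Finset.prod_mul_distrib, Finset.prod_const, Finset.card_univ, Fintype.card_fin,
      ← Real.exp_nat_mul, mul_comm α]
    rfl
  rw [h]
  unfold wordProd
  rw [← Real.finsetProd_rpow _ _ fun i _ => (hl _).le,
    ← Real.finsetProd_rpow _ _ fun i _ => (mul_pos (hp _) (Real.exp_pos _)).le,
    ← Finset.prod_mul_distrib]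

lemma wordProd_le_one {N : ℕ} {p : Fin N → ℝ} (hp : ∀ i, 0 < p i) (hp1 : ∀ i, p i ≤ 1)
    {n : ℕ} (w : Fin n → Fin N) : wordProd p w ≤ 1 :=
  Finset.prod_le_one (fun _ _ => (hp _).le) fun _ _ => hp1 _

/-! ### The growth rate of the word sums -/

lemma wordSum_le {N : ℕ} {lam p : Fin N → ℝ} (hl : ∀ i, 0 < lam i)
    (hp : ∀ i, 0 < p i) (hp1 : ∀ i, p i ≤ 1) {α : ℝ} (hα : 0 < α) (s : ℝ) {q : ℝ}
    (hq : q ∈ Icc (0 : ℝ) 1) (n : ℕ) :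
    wordSum lam p α s n ≤ partZ lam p α s q ^ n := by
  unfold wordSum partZ
  rw [← sum_wordProd]
  refine Finset.sum_le_sum fun w _ => ?_
  rw [← wordProd_rpow_mul hl hp]
  exact mul_le_mul_of_nonneg_left
    (hit_le_rpow (wordProd_pos hp w) (wordProd_le_one hp hp1 w)
      (Real.one_le_exp (by positivity)) hq) (Real.rpow_nonneg (wordProd_pos hl w).le _)

lemma hasDerivAt_partZ {N : ℕ} {lam p : Fin N → ℝ} (hp : ∀ i, 0 < p i) (α s q : ℝ) :
    HasDerivAt (partZ lam p α s)
      (∑ i, lam i ^ s * (p i * Real.exp α) ^ q * Real.log (p i * Real.exp α)) q := by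
  unfold partZ
  refine HasDerivAt.fun_sum fun i _ => ?_
  have h := ((hasDerivAt_id q).const_rpow (mul_pos (hp i) (Real.exp_pos α))).const_mul
    (lam i ^ s)
  refine h.congr_deriv ?_
  simp only [id]
  ring

/-- First-order condition at a minimiser `q` of `Z(s, ·)` on `[0, 1]`. -/
lemma deriv_sign {N : ℕ} {lam p : Fin N → ℝ} (hp : ∀ i, 0 < p i) {α s q : ℝ}
    (hq : q ∈ Icc (0 : ℝ) 1) (hmin : IsMinOn (partZ lam p α s) (Icc 0 1) q) :
    q * (∑ i, lam i ^ s * (p i * Real.exp α) ^ q * Real.log (p i * Real.exp α)) ≤ 0 ∧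
    0 ≤ (1 - q) *
      (∑ i, lam i ^ s * (p i * Real.exp α) ^ q * Real.log (p i * Real.exp α)) := by
  set D := ∑ i, lam i ^ s * (p i * Real.exp α) ^ q * Real.log (p i * Real.exp α) with hD
  have hd : HasDerivAt (partZ lam p α s) D q := hasDerivAt_partZ hp α s q
  have key : ∀ y ∈ Icc (0 : ℝ) 1, 0 ≤ (y - q) * D := by
    intro y hy
    have := hmin.localize.hasFDerivWithinAt_nonneg hd.hasFDerivAt.hasFDerivWithinAt
      (sub_mem_posTangentConeAt_of_segment_subset ((convex_Icc (0 : ℝ) 1).segment_subset hq hy))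
    simpa using this
  have k0 := key 0 (by simp)
  have k1 := key 1 (by simp)
  constructor <;> linarith

/-- The lower bound: at a minimiser `q` of `Z(s, ·)`, tilting by `λ_i^s (p_i e^α)^q` shows that
`wordSum` falls short of `Z(s, q)^n` by at most a factor `exp (-O(√n))`. -/
lemma le_wordSum {N : ℕ} [NeZero N] {lam p : Fin N → ℝ} (hl : ∀ i, 0 < lam i)
    (hp : ∀ i, 0 < p i) (hp1 : ∀ i, p i ≤ 1) {α : ℝ} {s q : ℝ}
    (hq : q ∈ Icc (0 : ℝ) 1) (hmin : IsMinOn (partZ lam p α s) (Icc 0 1) q) :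
    ∃ V : ℝ, 0 ≤ V ∧ ∀ n : ℕ,
      Real.exp (-(√(n * V) + 1)) * partZ lam p α s q ^ n / 2 ≤ wordSum lam p α s n := by
  set x : Fin N → ℝ := fun i => Real.log (p i * Real.exp α) with hx
  set g : Fin N → ℝ := fun i => lam i ^ s * (p i * Real.exp α) ^ q with hgdef
  have hg : ∀ i, 0 < g i := fun i =>
    mul_pos (Real.rpow_pos_of_pos (hl i) _)
      (Real.rpow_pos_of_pos (mul_pos (hp i) (Real.exp_pos _)) _)
  have hZ : 0 < ∑ i, g i := Finset.sum_pos (fun i _ => hg i) Finset.univ_nonempty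
  set m : ℝ := (∑ i, g i * x i) / ∑ i, g i with hm
  obtain ⟨hs0, hs1⟩ := deriv_sign hp hq hmin
  have hqm : q * m ≤ 0 := by
    rw [hm, ← mul_div_assoc]
    exact div_nonpos_of_nonpos_of_nonneg hs0 hZ.le
  have hqm1 : 0 ≤ (1 - q) * m := by
    rw [hm, ← mul_div_assoc]
    exact div_nonneg hs1 hZ.le
  set c : Fin N → ℝ := fun i => x i - m with hc
  set V : ℝ := (∑ i, g i * c i ^ 2) / ∑ i, g i with hV
  have hV0 : 0 ≤ V :=
    div_nonneg (Finset.sum_nonneg fun i _ => mul_nonneg (hg i).le (sq_nonneg _)) hZ.le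
  have h1 : ∑ i, g i * c i = 0 := by
    simp_rw [hc, mul_sub, Finset.sum_sub_distrib, ← Finset.sum_mul, hm]
    field_simp
    ring
  have h2 : ∑ i, g i * c i ^ 2 = V * ∑ i, g i := by
    rw [hV]
    field_simp
  refine ⟨V, hV0, fun n => ?_⟩
  have hnV : 0 ≤ n * V := by positivity
  have hmom := exp_neg_abs_moment g c hg V h1 h2 n (t := √(n * V) + 1) (by positivity)
    (by nlinarith [Real.sq_sqrt hnV, Real.sqrt_nonneg (n * V)])
  refine (div_le_div_of_nonneg_right hmom (by norm_num : (0 : ℝ) ≤ 2)).trans ?_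
  rw [Finset.sum_div]
  refine Finset.sum_le_sum fun w _ => ?_
  have hb : 0 < wordProd p w * Real.exp (α * n) := mul_pos (wordProd_pos hp w) (Real.exp_pos _)
  have hlow := exp_min_le_hit (wordProd_pos hp w) (wordProd_le_one hp hp1 w)
    (Real.exp_pos (α * n))
  set X := Real.log (wordProd p w * Real.exp (α * n)) with hX
  have hXsum : X = ∑ j, c (w j) + n * m := by
    have e1 : ∑ j, c (w j) = ∑ j, x (w j) - n * m := by
      simp [hc, Finset.sum_sub_distrib]
    have e2 : ∑ j, x (w j) = X := by
      have : ∀ i, x i = Real.log (p i) + α := fun i => by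
        simp only [hx]
        rw [Real.log_mul (hp i).ne' (Real.exp_pos _).ne', Real.log_exp]
      simp_rw [this, Finset.sum_add_distrib]
      rw [hX, Real.log_mul (wordProd_pos hp w).ne' (Real.exp_pos _).ne', Real.log_exp,
        wordProd, Real.log_prod fun i _ => (hp _).ne']
      simp [mul_comm]
    linarith
  have hexp : q * X - |∑ j, c (w j)| ≤ min 0 X := by
    have hn : (0 : ℝ) ≤ n := Nat.cast_nonneg n
    have a1 := mul_nonneg hn hqm1
    have a2 := mul_nonneg hn (neg_nonneg.2 hqm)
    set Y := ∑ j, c (w j) with hY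
    have b1 := le_abs_self Y
    have b2 := neg_abs_le Y
    have b0 := abs_nonneg Y
    obtain ⟨hq0, hq1⟩ := hq
    rw [le_min_iff, hXsum]
    constructor
    · nlinarith
    · nlinarith
  rw [← wordProd_rpow_mul hl hp, mul_assoc, mul_div_assoc]
  refine mul_le_mul_of_nonneg_left (le_trans ?_ hlow)
    (Real.rpow_nonneg (wordProd_pos hl w).le _)
  rw [Real.rpow_def_of_pos hb, ← hX, ← Real.exp_add]
  gcongr
  linarith

lemma continuous_partZ {N : ℕ} {lam p : Fin N → ℝ} (hp : ∀ i, 0 < p i) (α s : ℝ) :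
    Continuous (partZ lam p α s) :=
  continuous_iff_continuousAt.2 fun q => (hasDerivAt_partZ hp α s q).continuousAt

lemma partZ_pos {N : ℕ} [NeZero N] {lam p : Fin N → ℝ} (hl : ∀ i, 0 < lam i)
    (hp : ∀ i, 0 < p i) (α s q : ℝ) : 0 < partZ lam p α s q :=
  Finset.sum_pos (fun i _ => mul_pos (Real.rpow_pos_of_pos (hl i) _)
      (Real.rpow_pos_of_pos (mul_pos (hp i) (Real.exp_pos _)) _)) Finset.univ_nonempty

lemma partZ_strictAnti {N : ℕ} [NeZero N] {lam p : Fin N → ℝ}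
    (hlam : ∀ i, lam i ∈ Ioo (0 : ℝ) 1) (hp : ∀ i, 0 < p i) (α q : ℝ) :
    StrictAnti fun s => partZ lam p α s q := fun _ _ hst =>
  Finset.sum_lt_sum_of_nonempty Finset.univ_nonempty fun i _ =>
    mul_lt_mul_of_pos_right (Real.rpow_lt_rpow_of_exponent_gt (hlam i).1 (hlam i).2 hst)
      (Real.rpow_pos_of_pos (mul_pos (hp i) (Real.exp_pos _)) _)

/-- The pressure is an actual limit, equal to `log min_{q ∈ [0,1]} Z(s, q)`. -/
lemma tendsto_pressure {N : ℕ} [NeZero N] {lam p : Fin N → ℝ} (hl : ∀ i, 0 < lam i)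
    (hp : ∀ i, 0 < p i) (hp1 : ∀ i, p i ≤ 1) {α : ℝ} (hα : 0 < α) {s q : ℝ}
    (hq : q ∈ Icc (0 : ℝ) 1) (hmin : IsMinOn (partZ lam p α s) (Icc 0 1) q) :
    Tendsto (fun n : ℕ => Real.log (wordSum lam p α s n) / (n : ℝ)) atTop
      (𝓝 (Real.log (partZ lam p α s q))) := by
  obtain ⟨V, hV, hlow⟩ := le_wordSum hl hp hp1 hq hmin
  have hZ := partZ_pos hl hp α s q
  have hn : Tendsto (fun n : ℕ => (n : ℝ)) atTop atTop := tendsto_natCast_atTop_atTop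
  have hinv : Tendsto (fun n : ℕ => √V / √(n : ℝ)) atTop (𝓝 0) :=
    tendsto_const_nhds.div_atTop (Real.tendsto_sqrt_atTop.comp hn)
  have hinv2 : Tendsto (fun n : ℕ => (1 + Real.log 2) / (n : ℝ)) atTop (𝓝 0) :=
    tendsto_const_nhds.div_atTop hn
  have hlim : Tendsto (fun n : ℕ => Real.log (partZ lam p α s q) - √V / √(n : ℝ) -
      (1 + Real.log 2) / (n : ℝ)) atTop (𝓝 (Real.log (partZ lam p α s q))) := by
    simpa using (tendsto_const_nhds.sub hinv).sub hinv2
  refine tendsto_of_tendsto_of_tendsto_of_le_of_le' hlim tendsto_const_nhds ?_ ?_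
  · filter_upwards [eventually_gt_atTop 0] with n hn0
    have hn' : (0 : ℝ) < n := Nat.cast_pos.2 hn0
    rw [le_div_iff₀ hn']
    have hl := Real.log_le_log (by positivity) (hlow n)
    rw [Real.log_div (by positivity) (by norm_num), Real.log_mul (by positivity) (by positivity),
      Real.log_exp, Real.log_pow] at hl
    refine le_trans (le_of_eq ?_) hl
    have hs : √(n : ℝ) * √(n : ℝ) = n := Real.mul_self_sqrt hn'.le
    have hs0 : 0 < √(n : ℝ) := Real.sqrt_pos.2 hn'
    rw [Real.sqrt_mul hn'.le]
    have e : √V / √(n : ℝ) * n = √(n : ℝ) * √V := by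
      nth_rewrite 2 [← hs]
      field_simp
    rw [sub_mul, sub_mul, e, div_mul_cancel₀ _ hn'.ne']
    ring
  · filter_upwards [eventually_gt_atTop 0] with n hn0
    have hn' : (0 : ℝ) < n := Nat.cast_pos.2 hn0
    rw [div_le_iff₀ hn']
    have hpos : 0 < wordSum lam p α s n := lt_of_lt_of_le (by positivity) (hlow n)
    have := Real.log_le_log hpos (wordSum_le hl hp hp1 hα s hq n)
    rw [Real.log_pow] at this
    linarith

/-! ### The root of the pressure -/

lemma one_le_partZ_zero {N : ℕ} {lam p : Fin N → ℝ} (hp : ∀ i, 0 < p i)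
    (hp1 : ∀ i, p i ≤ 1) (hpsum : ∑ i, p i = 1) {α : ℝ} (hα : 0 < α) {q : ℝ}
    (hq : q ∈ Icc (0 : ℝ) 1) : 1 ≤ partZ lam p α 0 q := by
  rw [← hpsum]
  refine Finset.sum_le_sum fun i _ => ?_
  rw [Real.rpow_zero, one_mul, Real.mul_rpow (hp i).le (Real.exp_pos _).le]
  have h1 : p i ≤ p i ^ q := by
    simpa using Real.rpow_le_rpow_of_exponent_ge (hp i) (hp1 i) hq.2
  have h2 : 1 ≤ Real.exp α ^ q := Real.one_le_rpow (Real.one_le_exp hα.le) hq.1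
  nlinarith [hp i]

/-- The pressure `limsup_n (1/n) log Σ_(|ȷ|=n) λ_ȷ^s (1 − (1 − p_ȷ)^(e^(αn)))` has a
unique nonnegative root `s`, and it equals `inf_(q ∈ [0,1]) P_α(q)`. -/
theorem exp_pressure_root_eq_inf_pressure {N : ℕ} [NeZero N] (hN : 2 ≤ N)
    (lam p : Fin N → ℝ)
    (hlam : ∀ i, lam i ∈ Set.Ioo (0 : ℝ) 1)
    (hp : ∀ i, 0 < p i) (hpsum : ∑ i, p i = 1)
    (α : ℝ) (hα : 0 < α)
    (P : ℝ → ℝ)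
    (hP : ∀ q : ℝ, ∑ i, lam i ^ P q * (p i * Real.exp α) ^ q = 1) :
    (∃! s : ℝ, 0 ≤ s ∧
      Filter.limsup (fun n : ℕ => Real.log (∑ w : Fin n → Fin N,
          wordProd lam w ^ s * (1 - (1 - wordProd p w) ^ Real.exp (α * (n : ℝ)))) /
        (n : ℝ)) Filter.atTop = 0) ∧
    ∀ s : ℝ, 0 ≤ s →
      Filter.limsup (fun n : ℕ => Real.log (∑ w : Fin n → Fin N,
          wordProd lam w ^ s * (1 - (1 - wordProd p w) ^ Real.exp (α * (n : ℝ)))) /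
        (n : ℝ)) Filter.atTop = 0 →
      s = sInf (P '' Set.Icc 0 1) := by
  have hl : ∀ i, 0 < lam i := fun i => (hlam i).1
  have hp1 : ∀ i, p i ≤ 1 := fun i => by
    rw [← hpsum]
    exact Finset.single_le_sum (fun j _ => (hp j).le) (Finset.mem_univ i)
  have hP' : ∀ q, partZ lam p α (P q) q = 1 := hP
  have hlt : ∀ c q, c < P q ↔ 1 < partZ lam p α c q := fun c q => by
    rw [← hP' q]
    exact (partZ_strictAnti hlam hp α q).lt_iff_gt.symm
  have hle : ∀ c q, c ≤ P q ↔ 1 ≤ partZ lam p α c q := fun c q => by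
    rw [← hP' q]
    exact (partZ_strictAnti hlam hp α q).le_iff_ge.symm
  have huniq : ∀ s : ℝ, 0 ≤ s →
      Filter.limsup (fun n : ℕ => Real.log (∑ w : Fin n → Fin N,
          wordProd lam w ^ s * (1 - (1 - wordProd p w) ^ Real.exp (α * (n : ℝ)))) /
        (n : ℝ)) Filter.atTop = 0 →
      s = sInf (P '' Set.Icc 0 1) := by
    intro s _ hs
    obtain ⟨q, hq, hmin⟩ := isCompact_Icc.exists_isMinOn (nonempty_Icc.2 zero_le_one)
      (continuous_partZ (lam := lam) hp α s).continuousOn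
    have h0 : Real.log (partZ lam p α s q) = 0 :=
      (tendsto_pressure hl hp hp1 hα hq hmin).limsup_eq.symm.trans hs
    have hZ1 : partZ lam p α s q = 1 :=
      Real.eq_one_of_pos_of_log_eq_zero (partZ_pos hl hp α s q) h0
    have hPq : P q = s :=
      (partZ_strictAnti hlam hp α q).injective ((hP' q).trans hZ1.symm)
    have hleast : IsLeast (P '' Icc 0 1) s := by
      refine ⟨⟨q, hq, hPq⟩, ?_⟩
      rintro _ ⟨r, hr, rfl⟩
      rw [hle, ← hZ1]
      exact hmin hr
    exact hleast.csInf_eq.symm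
  have hlsc : LowerSemicontinuous P := by
    intro q c hc
    have hopen : IsOpen {r | 1 < partZ lam p α c r} :=
      isOpen_lt continuous_const (continuous_partZ hp α c)
    filter_upwards [hopen.mem_nhds ((hlt c q).1 hc)] with r hr
    exact (hlt c r).2 hr
  obtain ⟨q, hq, hmin⟩ := (hlsc.lowerSemicontinuousOn (Icc (0 : ℝ) 1)).exists_isMinOn
    (nonempty_Icc.2 zero_le_one) isCompact_Icc
  have hminZ : IsMinOn (partZ lam p α (P q)) (Icc 0 1) q := fun r hr => by
    change partZ lam p α (P q) q ≤ partZ lam p α (P q) r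
    rw [hP' q]
    exact (hle _ _).1 (hmin hr)
  have hroot := (tendsto_pressure hl hp hp1 hα hq hminZ).limsup_eq
  rw [hP' q, Real.log_one] at hroot
  refine ⟨⟨P q, ⟨(hle _ _).2 (one_le_partZ_zero hp hp1 hpsum hα hq), hroot⟩, ?_⟩, huniq⟩
  rintro s ⟨hs0, hs⟩
  exact (huniq s hs0 hs).trans
    (huniq _ ((hle _ _).2 (one_le_partZ_zero hp hp1 hpsum hα hq)) hroot).symm
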